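/- Let x be a one-sided infinite word over a finite nonempty alphabet A. Then d_0(x) = 2 if and only if p_x(n) = Θ(n). In particular, every infinite word of complexity O(n) has cost c(x) = 0. -/

import Mathlib

open scoped ENNReal Pointwise

universe u

variable {A : Type u}

/-- The factor of `x` of length `n` starting at position `i`. -/
def wordSeg (x : ℕ → A) (i n : ℕ) : List A := (List.range n).map fun j => x (i + j)

/-- The set of finite factors of a one-sided infinite word (including the empty word). -/
def Fac (x : ℕ → A) : Set (List A) := {u | ∃ i n, u = wordSeg x i n}

/-- The factor of a two-sided word `x` of length `n` starting at position `i`. -/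
def wordSegZ (x : ℤ → A) (i : ℤ) (n : ℕ) : List A := (List.range n).map fun j => x (i + j)

/-- The set of finite factors of a two-sided infinite word (including the empty word). -/
def FacZ (x : ℤ → A) : Set (List A) := {u | ∃ (i : ℤ) (n : ℕ), u = wordSegZ x i n}

/-- The complexity of a language: the number of words of length `n` in it. -/
noncomputable def complexity (L : Set (List A)) (n : ℕ) : ℕ :=
  {u ∈ L | u.length = n}.ncard

/-- The accumulative complexity `p*_L(n) = Σ_{i=0}^{n} p_L(i)`. -/
noncomputable def accComplexity (L : Set (List A)) (n : ℕ) : ℕ :=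
  ∑ i ∈ Finset.range (n + 1), complexity L i

/-- Concatenation (product) of two languages. -/
def prodL (S T : Set (List A)) : Set (List A) := {w | ∃ s ∈ S, ∃ t ∈ T, w = s ++ t}

/-- `powL S k` = `S^k`, the set of concatenations of `k` elements of `S`. -/
def powL (S : Set (List A)) : ℕ → Set (List A)
  | 0 => {([] : List A)}
  | k + 1 => prodL (powL S k) S

/-- `f(n) = O(n^α)`. -/
def PolyBound (f : ℕ → ℕ) (α : ℝ) : Prop :=
  ∃ C : ℝ, ∀ n : ℕ, 1 ≤ n → (f n : ℝ) ≤ C * (n : ℝ) ^ α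

/-- The `α`-dimension `d_α(L)`: infimum of the integers `k ≥ 1` such that `L ⊆ S^k`
for some language `S` with `p_S(n) = O(n^α)`, with `inf ∅ = ⊤`. -/
noncomputable def polyDim (α : ℝ) (L : Set (List A)) : ℕ∞ :=
  sInf {k : ℕ∞ | ∃ m : ℕ, k = m ∧ 1 ≤ m ∧
    ∃ S : Set (List A), PolyBound (complexity S) α ∧ L ⊆ powL S m}

/-- The accumulative `α`-dimension `d*_α(L)`. -/
noncomputable def polyDimStar (α : ℝ) (L : Set (List A)) : ℕ∞ :=
  sInf {k : ℕ∞ | ∃ m : ℕ, k = m ∧ 1 ≤ m ∧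
    ∃ S : Set (List A), PolyBound (accComplexity S) α ∧ L ⊆ powL S m}

/-- The cost `c(L)`: infimum of the `α ≥ 0` with `d_α(L) < +∞`, with `inf ∅ = ⊤`. -/
noncomputable def cost (L : Set (List A)) : ℝ≥0∞ :=
  sInf {a : ℝ≥0∞ | ∃ α : ℝ, 0 ≤ α ∧ a = ENNReal.ofReal α ∧ polyDim α L ≠ ⊤}

/-- A one-sided word is ultimately periodic if it is of the form `u v v v ⋯`. -/
def UltimatelyPeriodic (x : ℕ → A) : Prop :=
  ∃ N p : ℕ, 0 < p ∧ ∀ n : ℕ, N ≤ n → x (n + p) = x n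

/-- A two-sided word is eventually periodic if it is periodic far enough to the right
and far enough to the left. -/
def EventuallyPeriodicZ (x : ℤ → A) : Prop :=
  (∃ p : ℕ, 0 < p ∧ ∃ N : ℤ, ∀ n : ℤ, N ≤ n → x (n + p) = x n) ∧
  (∃ p : ℕ, 0 < p ∧ ∃ N : ℤ, ∀ n : ℤ, n ≤ N → x (n - p) = x n)

/-- A one-sided word is recurrent if each of its factors occurs infinitely often. -/
def Recurrent (x : ℕ → A) : Prop :=
  ∀ u ∈ Fac x, ∀ N : ℕ, ∃ i : ℕ, N ≤ i ∧ u = wordSeg x i u.length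

/-- `u` is a right special factor for the language `F`. -/
def RightSpecial (F : Set (List A)) (u : List A) : Prop :=
  u ∈ F ∧ ∃ a b : A, a ≠ b ∧ u ++ [a] ∈ F ∧ u ++ [b] ∈ F

/-- `M` is a `D`-marker set for a word with factor set `F`: every factor of length
at least `D n` contains a factor of length `n` belonging to `M`. -/
def MarkerSet (D : ℕ) (M F : Set (List A)) : Prop :=
  ∀ n : ℕ, 1 ≤ n → ∀ u ∈ F, D * n ≤ u.length →
    ∃ v ∈ M, v.length = n ∧ v <:+: u

/-- A language is factorial if it contains all factors of its members. -/
def IsFactorial (S : Set (List A)) : Prop := ∀ u ∈ S, ∀ v : List A, v <:+: u → v ∈ S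

/-- The bound `Σ_{k ∈ I_n ∩ ℕ} p_M(2^k)(1 + 4 p(3n)/2^k)` where
`I_n = (log₂(n/(2D)), log₂(2n)]`, i.e. the sum is over natural `k` with
`n/(2D) < 2^k ≤ 2n`. -/
noncomputable def markerBound (M F : Set (List A)) (D n : ℕ) : ℝ :=
  ∑ k ∈ (Finset.range (2 * n + 2)).filter (fun k => n < 2 * D * 2 ^ k ∧ 2 ^ k ≤ 2 * n),
    (complexity M (2 ^ k) : ℝ) * (1 + 4 * (complexity F (3 * n) : ℝ) / 2 ^ k)

-- The word `u = ∏_{i=1}^{∞} a b^i = a b a b b a b b b ⋯` over `{a,b}`, with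
-- `a = false`, `b = true`: position `n` carries an `a` iff `n = (i-1)(i+2)/2` for some
-- `i ≥ 1`, i.e. iff `2n = m(m+3)` for some `m ≥ 0`.
open Classical in
noncomputable def uWord (n : ℕ) : Bool :=
  if ∃ m : ℕ, 2 * n = m * (m + 3) then false else true

/-
If `d₀(x) ≤ 2`, a word of length `n` is determined by a cutting point and two words of bounded
complexity, whence `p_x(n) = O(n)`; and `d₀(x) ≤ 1` means that `p_x` is bounded. By Morse and
Hedlund `p_x(n) ≥ n` as soon as `p_x` is unbounded, so what has to be shown is that an aperiodic
word of linear complexity satisfies `Fac x ⊆ S ^ 2` with `S` of bounded complexity.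

For `M = 2 ^ k` linear complexity provides a length `m ∈ [2M, 4M)` at which `p_x` has a bounded
increment, hence boundedly many right special factors `w` of length `m`; by aperiodicity one of them
occurs in every factor of length `O(M)`. Such a factor is cut at distance `M` after an occurrence
of `w` that is the first or the last of a run of occurrences with gaps less than `M`. These
occurrences are `M`-separated and recognizable from a bounded window of length `W = O(M)`, so each
of them is seen from `W` factors of length `3W`, and since `p_x(3W) = O(W)` only boundedly many
pieces of each length arise. If the factor contains no end of the run, the Fine–Wilf theorem shows
that it is a factor of the bi-infinite periodic extension of `w`, where a single cut is enough. A
given length is concerned by boundedly many scales `k`, so the union over all `k` has bounded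
complexity.
-/

section Words

variable {x : ℕ → A} {i j n : ℕ}

@[simp]
theorem length_wordSeg (x : ℕ → A) (i n : ℕ) : (wordSeg x i n).length = n := by
  simp [wordSeg]

@[simp]
theorem length_wordSegZ (y : ℤ → A) (k : ℤ) (n : ℕ) : (wordSegZ y k n).length = n := by
  simp [wordSegZ]

-- In `wordSegZ` the coercion `ℕ → ℤ` is applied to the list of positions instead of under the map.
theorem wordSegZ_eq_map (y : ℤ → A) (k : ℤ) (n : ℕ) :
    wordSegZ y k n = (List.range n).map fun t : ℕ => y (k + t) := by
  simp [wordSegZ, ← List.map_eq_flatMap]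

theorem wordSeg_eq_wordSeg_iff :
    wordSeg x i n = wordSeg x j n ↔ ∀ t < n, x (i + t) = x (j + t) := by
  simp [wordSeg]

theorem wordSeg_eq_wordSegZ_iff {y : ℤ → A} {k : ℤ} :
    wordSeg x i n = wordSegZ y k n ↔ ∀ t < n, x (i + t) = y (k + t) := by
  simp [wordSeg, wordSegZ_eq_map]

theorem getElem?_wordSeg {t : ℕ} (ht : t < n) : (wordSeg x i n)[t]? = some (x (i + t)) := by
  simp [wordSeg, ht]

theorem wordSeg_add (x : ℕ → A) (i m n : ℕ) :
    wordSeg x i (m + n) = wordSeg x i m ++ wordSeg x (i + m) n := by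
  simp [wordSeg, List.range_add, Function.comp_def, add_assoc]

theorem wordSeg_succ (x : ℕ → A) (i n : ℕ) : wordSeg x i (n + 1) = wordSeg x i n ++ [x (i + n)] :=
  wordSeg_add x i n 1

theorem wordSeg_mem_fac (x : ℕ → A) (i n : ℕ) : wordSeg x i n ∈ Fac x :=
  ⟨i, n, rfl⟩

theorem wordSeg_congr_of_le (h : wordSeg x i n = wordSeg x j n) {s m : ℕ} (hsm : s + m ≤ n) :
    wordSeg x (i + s) m = wordSeg x (j + s) m := by
  rw [wordSeg_eq_wordSeg_iff] at h ⊢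
  intro t ht
  simpa only [add_assoc] using h (s + t) (by lia)

end Words

section Complexity

variable {S T : Set (List A)}

theorem prodL_mono {S' T' : Set (List A)} (hS : S ⊆ S') (hT : T ⊆ T') : prodL S T ⊆ prodL S' T' :=
  fun _ ⟨s, hs, t, ht, hw⟩ => ⟨s, hS hs, t, hT ht, hw⟩

theorem powL_one (S : Set (List A)) : powL S 1 = S := by
  ext w
  simp [powL, prodL]

theorem powL_two (S : Set (List A)) : powL S 2 = prodL S S :=
  congrArg (prodL · S) (powL_one S)

theorem complexity_setOf_eq_apply_length_le_one (g : ℕ → List A) (n : ℕ) :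
    complexity {v | v = g v.length} n ≤ 1 := by
  refine (Set.ncard_le_ncard (t := {g n}) ?_).trans_eq (Set.ncard_singleton _)
  rintro v ⟨hv, rfl⟩
  exact hv

theorem complexity_eq_zero {n : ℕ} (h : ∀ u ∈ S, u.length ≠ n) : complexity S n = 0 := by
  rw [complexity, Set.sep_eq_empty_iff_mem_false.mpr h, Set.ncard_empty]

theorem complexity_union_le (S T : Set (List A)) (n : ℕ) :
    complexity (S ∪ T) n ≤ complexity S n + complexity T n := by
  have h : {u ∈ S ∪ T | u.length = n} = {u ∈ S | u.length = n} ∪ {u ∈ T | u.length = n} :=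
    Set.union_inter_distrib_right S T _
  simpa only [complexity, h] using Set.ncard_union_le _ _

theorem complexity_le_ncard (hS : S.Finite) (n : ℕ) : complexity S n ≤ S.ncard :=
  Set.ncard_le_ncard (Set.sep_subset _ _) hS

theorem complexity_biUnion_le_card_mul {ι : Type*} (s : Finset ι) {L : ι → Set (List A)} {n B : ℕ}
    (hL : ∀ i ∈ s, complexity (L i) n ≤ B) : complexity (⋃ i ∈ s, L i) n ≤ s.card * B := by
  have h : {u ∈ ⋃ i ∈ s, L i | u.length = n} = ⋃ i ∈ s, {u ∈ L i | u.length = n} := by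
    ext u
    simp only [Set.mem_iUnion, Set.mem_ofPred_eq, exists_prop]
    tauto
  calc complexity (⋃ i ∈ s, L i) n ≤ ∑ i ∈ s, complexity (L i) n := by
        simpa only [complexity, h] using Finset.set_ncard_biUnion_le s _
    _ ≤ s.card * B := Finset.sum_le_card_nsmul s _ B hL

variable [Finite A]

theorem finite_setOf_mem_and_length_eq (S : Set (List A)) (n : ℕ) :
    {u ∈ S | u.length = n}.Finite :=
  (List.finite_length_eq A n).subset fun _ hu => hu.2

theorem complexity_le_of_forall_length_eq {n : ℕ} (h : ∀ u ∈ S, u.length = n → u ∈ T) :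
    complexity S n ≤ complexity T n :=
  Set.ncard_le_ncard (fun u hu => ⟨h u hu.1 hu.2, hu.2⟩) (finite_setOf_mem_and_length_eq T n)

theorem complexity_mono (h : S ⊆ T) (n : ℕ) : complexity S n ≤ complexity T n :=
  complexity_le_of_forall_length_eq fun _ hu _ => h hu

theorem complexity_prodL_le (S T : Set (List A)) (n : ℕ) :
    complexity (prodL S T) n ≤
      ∑ k ∈ Finset.range (n + 1), complexity S k * complexity T (n - k) := by
  let E (k : ℕ) : Set (List A × List A) := {u ∈ S | u.length = k} ×ˢ {u ∈ T | u.length = n - k}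
  have hE (k) : (E k).Finite :=
    (finite_setOf_mem_and_length_eq S k).prod (finite_setOf_mem_and_length_eq T (n - k))
  have hsub : {w ∈ prodL S T | w.length = n} ⊆
      ⋃ k ∈ Finset.range (n + 1), (fun q => q.1 ++ q.2) '' E k := by
    rintro w ⟨⟨s, hs, t, ht, rfl⟩, hw⟩
    rw [List.length_append] at hw
    exact Set.mem_biUnion (x := s.length) (Finset.mem_coe.mpr (Finset.mem_range.mpr (by lia)))
      ⟨(s, t), ⟨⟨hs, rfl⟩, ht, by lia⟩, rfl⟩
  calc complexity (prodL S T) n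
      ≤ (⋃ k ∈ Finset.range (n + 1), (fun q => q.1 ++ q.2) '' E k).ncard :=
        Set.ncard_le_ncard hsub <|
          (Finset.finite_toSet _).biUnion fun k _ => (hE k).image _
    _ ≤ ∑ k ∈ Finset.range (n + 1), ((fun q => q.1 ++ q.2) '' E k).ncard :=
        Finset.set_ncard_biUnion_le _ _
    _ ≤ ∑ k ∈ Finset.range (n + 1), (E k).ncard :=
        Finset.sum_le_sum fun k _ => Set.ncard_image_le (hE k)
    _ = ∑ k ∈ Finset.range (n + 1), complexity S k * complexity T (n - k) :=
        Finset.sum_congr rfl fun k _ => Set.ncard_prod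

end Complexity

section PolyBound

variable {f : ℕ → ℕ}

theorem polyBound_zero_iff : PolyBound f 0 ↔ ∃ B, ∀ n, f n ≤ B := by
  refine ⟨fun ⟨C, hC⟩ => ⟨max ⌈C⌉₊ (f 0), fun n => ?_⟩, fun ⟨B, hB⟩ => ⟨B, fun n _ => ?_⟩⟩
  · rcases n.eq_zero_or_pos with rfl | hn
    · exact le_max_right _ _
    · refine le_max_of_le_left (Nat.cast_le.mp ((?_ : (f n : ℝ) ≤ C).trans (Nat.le_ceil C)))
      simpa using hC n hn
  · simpa using hB n

theorem polyBound_one_iff : PolyBound f 1 ↔ ∃ C, ∀ n, 1 ≤ n → f n ≤ C * n := by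
  refine ⟨fun ⟨C, hC⟩ => ⟨⌈C⌉₊, fun n hn => ?_⟩, fun ⟨C, hC⟩ => ⟨C, fun n hn => ?_⟩⟩
  · have h : (f n : ℝ) ≤ ⌈C⌉₊ * n := calc
      (f n : ℝ) ≤ C * n := by simpa using hC n hn
      _ ≤ ⌈C⌉₊ * n := by gcongr; exact Nat.le_ceil C
    exact_mod_cast h
  · simpa using (mod_cast hC n hn : (f n : ℝ) ≤ C * n)

theorem PolyBound.one_of_zero (h : PolyBound f 0) : PolyBound f 1 := by
  obtain ⟨B, hB⟩ := polyBound_zero_iff.mp h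
  exact polyBound_one_iff.mpr ⟨B, fun n hn => (hB n).trans (Nat.le_mul_of_pos_right B hn)⟩

theorem polyBound_one_of_eventually_le_mul {c : ℝ} {N : ℕ} (h : ∀ n, N ≤ n → (f n : ℝ) ≤ c * n) :
    PolyBound f 1 := by
  refine polyBound_one_iff.mpr ⟨⌈c⌉₊ + ∑ k ∈ Finset.range N, f k, fun n hn => ?_⟩
  rw [add_mul]
  obtain hN | hN := lt_or_ge n N
  · calc f n ≤ ∑ k ∈ Finset.range N, f k :=
          Finset.single_le_sum_of_canonicallyOrdered (Finset.mem_range.mpr hN)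
      _ ≤ (∑ k ∈ Finset.range N, f k) * n := Nat.le_mul_of_pos_right _ hn
      _ ≤ ⌈c⌉₊ * n + (∑ k ∈ Finset.range N, f k) * n := Nat.le_add_left _ _
  · have hceil : (f n : ℝ) ≤ ⌈c⌉₊ * n :=
      (h n hN).trans (mul_le_mul_of_nonneg_right (Nat.le_ceil c) n.cast_nonneg)
    exact Nat.le_add_right_of_le (mod_cast hceil)

theorem not_polyBound_zero_of_eventually_mul_le {c : ℝ} {N : ℕ} (hc : 0 < c)
    (h : ∀ n, N ≤ n → c * n ≤ f n) : ¬ PolyBound f 0 := by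
  rw [polyBound_zero_iff]
  rintro ⟨B, hB⟩
  obtain ⟨n, hn⟩ := exists_nat_gt (B / c)
  have hlarge : (B : ℝ) < c * n := (div_lt_iff₀' hc).mp hn
  have hsmall : c * (max n N : ℕ) ≤ B := (h _ (le_max_right _ _)).trans (mod_cast hB _)
  exact (hlarge.trans_le (by gcongr; exact le_max_left _ _)).not_ge hsmall

theorem PolyBound.mono {g : ℕ → ℕ} {α : ℝ} (hg : PolyBound g α) (hfg : ∀ n, f n ≤ g n) :
    PolyBound f α := by
  obtain ⟨C, hC⟩ := hg
  exact ⟨C, fun n hn => (Nat.cast_le.mpr (hfg n)).trans (hC n hn)⟩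

theorem polyBound_complexity_prodL [Finite A] {S T : Set (List A)}
    (hS : PolyBound (complexity S) 0) (hT : PolyBound (complexity T) 0) :
    PolyBound (complexity (prodL S T)) 1 := by
  obtain ⟨B, hB⟩ := polyBound_zero_iff.mp hS
  obtain ⟨C, hC⟩ := polyBound_zero_iff.mp hT
  refine polyBound_one_iff.mpr ⟨2 * (B * C), fun n hn => ?_⟩
  calc complexity (prodL S T) n
      ≤ ∑ k ∈ Finset.range (n + 1), complexity S k * complexity T (n - k) :=
        complexity_prodL_le S T n
    _ ≤ ∑ _k ∈ Finset.range (n + 1), B * C :=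
        Finset.sum_le_sum fun k _ => Nat.mul_le_mul (hB k) (hC (n - k))
    _ = (n + 1) * (B * C) := by simp
    _ ≤ 2 * n * (B * C) := Nat.mul_le_mul_right _ (by lia)
    _ = 2 * (B * C) * n := by ring

theorem polyDim_le_natCast_iff {α : ℝ} {L : Set (List A)} {k : ℕ} :
    polyDim α L ≤ k ↔ ∃ m, 1 ≤ m ∧ m ≤ k ∧
      ∃ S : Set (List A), PolyBound (complexity S) α ∧ L ⊆ powL S m := by
  refine ⟨fun h => ?_, fun ⟨m, hm, hmk, hS⟩ =>
    (sInf_le ⟨m, rfl, hm, hS⟩ : polyDim α L ≤ m).trans (mod_cast hmk)⟩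
  have hlt : polyDim α L < (k + 1 : ℕ) := h.trans_lt (mod_cast k.lt_succ_self)
  obtain ⟨_, ⟨m, rfl, hm, hS⟩, hmk⟩ := sInf_lt_iff.mp hlt
  exact ⟨m, hm, Nat.lt_succ_iff.mp (mod_cast hmk), hS⟩

theorem polyDim_le_one_iff [Finite A] {α : ℝ} {L : Set (List A)} :
    polyDim α L ≤ 1 ↔ PolyBound (complexity L) α := by
  rw [← Nat.cast_one, polyDim_le_natCast_iff]
  constructor
  · rintro ⟨m, hm, hm', S, hS, hLS⟩
    obtain rfl : m = 1 := by lia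
    exact hS.mono (complexity_mono (powL_one S ▸ hLS))
  · exact fun h => ⟨1, le_rfl, le_rfl, L, h, (powL_one L).ge⟩

theorem cost_eq_zero_of_polyDim_zero_ne_top {L : Set (List A)} (h : polyDim 0 L ≠ ⊤) :
    cost L = 0 :=
  nonpos_iff_eq_zero.mp (sInf_le ⟨0, le_rfl, ENNReal.ofReal_zero.symm, h⟩)

end PolyBound

section RightSpecial

theorem complexity_add_complexity_rightSpecial_le [Finite A] {F : Set (List A)}
    (hF : ∀ u ∈ F, ∃ a, u ++ [a] ∈ F) (m : ℕ) :
    complexity F m + complexity {u | RightSpecial F u} m ≤ complexity F (m + 1) := by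
  obtain _ | _ := isEmpty_or_nonempty A
  · have hF_empty : F = ∅ := Set.eq_empty_of_forall_notMem fun u hu => isEmptyElim (hF u hu).choose
    simp [hF_empty, complexity, RightSpecial]
  choose! e he using hF
  have hr : ∀ u, RightSpecial F u → ∃ r, r ≠ e u ∧ u ++ [r] ∈ F := by
    rintro u ⟨-, a, b, hab, ha, hb⟩
    obtain rfl | hae := eq_or_ne a (e u)
    exacts [⟨b, hab.symm, hb⟩, ⟨a, hae, ha⟩]
  choose! r hre hr using hr
  have hinj (g : List A → A) : Function.Injective fun u => u ++ [g u] :=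
    fun u v h => (List.append_inj' h rfl).1
  have hdisj : Disjoint ((fun u => u ++ [e u]) '' {u ∈ F | u.length = m})
      ((fun u => u ++ [r u]) '' {u ∈ {u | RightSpecial F u} | u.length = m}) := by
    rw [Set.disjoint_left]
    rintro _ ⟨u, -, rfl⟩ ⟨v, ⟨hv, -⟩, h⟩
    obtain ⟨rfl, h'⟩ := List.append_inj' h rfl
    exact hre v hv (List.singleton_inj.mp h')
  unfold complexity
  rw [← Set.ncard_image_of_injective _ (hinj e),
    ← Set.ncard_image_of_injective {u ∈ {u | RightSpecial F u} | u.length = m} (hinj r),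
    ← Set.ncard_union_eq hdisj ((finite_setOf_mem_and_length_eq _ m).image _)
      ((finite_setOf_mem_and_length_eq _ m).image _)]
  refine Set.ncard_le_ncard (Set.union_subset ?_ ?_) (finite_setOf_mem_and_length_eq F (m + 1))
  · rintro _ ⟨u, ⟨hu, rfl⟩, rfl⟩
    exact ⟨he u hu, by simp⟩
  · rintro _ ⟨u, ⟨hu, rfl⟩, rfl⟩
    exact ⟨hr u hu, by simp⟩

variable {x : ℕ → A} {i j m : ℕ}

theorem apply_eq_of_not_rightSpecial (h : wordSeg x i m = wordSeg x j m)
    (hi : ¬ RightSpecial (Fac x) (wordSeg x i m)) : x (i + m) = x (j + m) := by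
  by_contra hne
  refine hi ⟨wordSeg_mem_fac x i m, _, _, hne, ?_, ?_⟩
  · exact wordSeg_succ x i m ▸ wordSeg_mem_fac x i (m + 1)
  · exact h ▸ wordSeg_succ x j m ▸ wordSeg_mem_fac x j (m + 1)

theorem ultimatelyPeriodic_of_wordSeg_eq (hij : i < j) (h : wordSeg x i m = wordSeg x j m)
    (hns : ∀ k, i ≤ k → k < j → ¬ RightSpecial (Fac x) (wordSeg x k m)) :
    UltimatelyPeriodic x := by
  obtain ⟨p, rfl⟩ := exists_add_of_le hij.le
  have hperiod : ∀ k, i ≤ k →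
      ¬ RightSpecial (Fac x) (wordSeg x k m) ∧ wordSeg x k m = wordSeg x (k + p) m := by
    intro k
    induction k using Nat.strong_induction_on with
    | _ k ih =>
      intro hik
      constructor
      · by_cases hk : k < i + p
        · exact hns k hik hk
        · obtain ⟨hnot, heq⟩ := ih (k - p) (by lia) (by lia)
          rwa [heq, Nat.sub_add_cancel (by lia)] at hnot
      · obtain rfl | hik := hik.eq_or_lt
        · exact h
        obtain ⟨k, rfl⟩ := Nat.exists_eq_add_of_lt hik
        obtain ⟨hnot, heq⟩ := ih (i + k) (by lia) (by lia)
        have hsucc : wordSeg x (i + k) (m + 1) = wordSeg x (i + k + p) (m + 1) := by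
          rw [wordSeg_succ, wordSeg_succ, heq, apply_eq_of_not_rightSpecial heq hnot]
        simpa only [add_right_comm] using wordSeg_congr_of_le hsucc (s := 1) (m := m) (by lia)
  refine ⟨i + m, p, by lia, fun n hn => ?_⟩
  obtain ⟨hnot, heq⟩ := hperiod (n - m) (by lia)
  have hx := apply_eq_of_not_rightSpecial heq hnot
  rwa [add_right_comm, Nat.sub_add_cancel (by lia), eq_comm] at hx

theorem polyBound_zero_of_ultimatelyPeriodic [Finite A] (hx : UltimatelyPeriodic x) :
    PolyBound (complexity (Fac x)) 0 := by
  obtain ⟨N, p, hp, hperiod⟩ := hx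
  have hfac (n i) : ∃ k < N + p, wordSeg x i n = wordSeg x k n := by
    induction i using Nat.strong_induction_on with
    | _ i ih =>
      by_cases hi : i < N + p
      · exact ⟨i, hi, rfl⟩
      obtain ⟨k, hk, heq⟩ := ih (i - p) (by lia)
      refine ⟨k, hk, heq ▸ wordSeg_eq_wordSeg_iff.mpr fun t _ => ?_⟩
      rw [← hperiod (i - p + t) (by lia)]
      congr 1
      lia
  refine polyBound_zero_iff.mpr ⟨(Finset.range (N + p)).card * 1, fun n => ?_⟩
  refine (complexity_mono ?_ n).trans <| complexity_biUnion_le_card_mul (Finset.range (N + p))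
    fun k _ => complexity_setOf_eq_apply_length_le_one (wordSeg x k) n
  rintro _ ⟨i, n, rfl⟩
  obtain ⟨k, hk, heq⟩ := hfac n i
  exact Set.mem_biUnion (Finset.mem_coe.mpr (Finset.mem_range.mpr hk)) (by simpa using heq)

variable [Finite A]

theorem exists_wordSeg_eq_wordSeg (x : ℕ → A) (a m : ℕ) :
    ∃ i j, a ≤ i ∧ i < j ∧ j ≤ a + complexity (Fac x) m ∧ wordSeg x i m = wordSeg x j m := by
  have hmaps : Set.MapsTo (fun i => wordSeg x i m)
      (Finset.Icc a (a + complexity (Fac x) m) : Set ℕ) {u ∈ Fac x | u.length = m} :=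
    fun i _ => ⟨wordSeg_mem_fac x i m, length_wordSeg x i m⟩
  have hcard : complexity (Fac x) m <
      (Finset.Icc a (a + complexity (Fac x) m) : Set ℕ).ncard := by
    rw [Set.ncard_coe_finset, Nat.card_Icc]
    lia
  obtain ⟨i, hi, j, hj, hij, heq⟩ := Set.exists_ne_map_eq_of_ncard_lt_of_maps_to hcard hmaps
    (finite_setOf_mem_and_length_eq _ m)
  simp only [Finset.coe_Icc, Set.mem_Icc] at hi hj
  rcases hij.lt_or_gt with hij | hij
  exacts [⟨i, j, hi.1, hij, hj.2, heq⟩, ⟨j, i, hj.1, hij, hi.2, heq.symm⟩]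

theorem exists_rightSpecial_wordSeg (hx : ¬ UltimatelyPeriodic x) (a m : ℕ) :
    ∃ i, a ≤ i ∧ i < a + complexity (Fac x) m ∧ RightSpecial (Fac x) (wordSeg x i m) := by
  obtain ⟨i, j, hai, hij, hja, heq⟩ := exists_wordSeg_eq_wordSeg x a m
  by_contra! hns
  exact hx <| ultimatelyPeriodic_of_wordSeg_eq hij heq fun k hik hkj =>
    hns k (hai.trans hik) (hkj.trans_le hja)

theorem complexity_fac_add_complexity_rightSpecial_le (x : ℕ → A) (m : ℕ) :
    complexity (Fac x) m + complexity {u | RightSpecial (Fac x) u} m ≤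
      complexity (Fac x) (m + 1) := by
  refine complexity_add_complexity_rightSpecial_le ?_ m
  rintro _ ⟨i, n, rfl⟩
  exact ⟨x (i + n), wordSeg_succ x i n ▸ wordSeg_mem_fac x i (n + 1)⟩

theorem le_complexity_fac (hx : ¬ UltimatelyPeriodic x) (n : ℕ) : n ≤ complexity (Fac x) n := by
  refine StrictMono.le_apply (strictMono_nat_of_lt_succ fun m => ?_)
  obtain ⟨i, -, -, hi⟩ := exists_rightSpecial_wordSeg hx 0 m
  have hpos : 0 < complexity {u | RightSpecial (Fac x) u} m :=
    (Set.ncard_pos (finite_setOf_mem_and_length_eq _ m)).mpr ⟨_, hi, length_wordSeg x i m⟩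
  have := complexity_fac_add_complexity_rightSpecial_le x m
  lia

end RightSpecial

section Local

variable {β : Type*} {x : ℕ → A} {W h n : ℕ} {P : Set ℕ} {f : ℕ → β}

/-- `f` is a *sliding block code* of radius `W` on `x`: the value of `f` at a position `i ≥ W` is
determined by the factor of `x` occupying the positions `i - W, …, i + W - 1`. Sets of positions
are treated as `Prop`-valued functions. The window is indexed by its first position, so that no
subtraction occurs. -/
def IsLocal (x : ℕ → A) (W : ℕ) (f : ℕ → β) : Prop :=
  ∀ ⦃i j⦄, wordSeg x i (2 * W) = wordSeg x j (2 * W) → f (i + W) = f (j + W)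

theorem isLocal_mem_of_imp
    (hP : ∀ i j, wordSeg x i (2 * W) = wordSeg x j (2 * W) → i + W ∈ P → j + W ∈ P) :
    IsLocal x W (· ∈ P) :=
  fun i j hij => propext ⟨hP i j hij, hP j i hij.symm⟩

/-- `P` is *`h`-separated*: distinct elements of `P` differ by at least `h`. -/
def IsSeparated (h : ℕ) (P : Set ℕ) : Prop :=
  ∀ ⦃i⦄, i ∈ P → ∀ ⦃j⦄, j ∈ P → i < j → i + h ≤ j

theorem IsSeparated.eq_of_div_eq (hP : IsSeparated h P) (hh : 0 < h)
    {i j : ℕ} (hi : i ∈ P) (hj : j ∈ P) (hij : i / h = j / h) : i = j := by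
  have hlt {i j} (hi : i ∈ P) (hj : j ∈ P) (hij : i < j) : i / h < j / h := by
    rw [← Nat.succ_le_iff, Nat.succ_eq_add_one, ← Nat.add_div_right i hh]
    exact Nat.div_le_div_right (hP hi hj hij)
  rcases lt_trichotomy i j with hlt' | heq | hgt
  exacts [absurd hij (hlt hi hj hlt').ne, heq, absurd hij (hlt hj hi hgt).ne']

theorem IsSeparated.ncard_inter_Iio_le (hP : IsSeparated h P) (hh : 0 < h) (n : ℕ) :
    (P ∩ Set.Iio n).ncard ≤ n / h + 1 := by
  have hmaps : ∀ i ∈ P ∩ Set.Iio n, i / h ∈ Set.Iio (n / h + 1) := fun i hi =>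
    Nat.lt_succ_of_le (Nat.div_le_div_right (Set.mem_Iio.mp hi.2).le)
  simpa only [Set.ncard_Iio_nat] using
    Set.ncard_le_ncard_of_injOn (· / h) hmaps
      (fun i hi j hj hij => hP.eq_of_div_eq hh hi.1 hj.1 hij)

theorem IsSeparated.offset_eq_of_wordSeg_eq (hP : IsSeparated h P) (hh : 0 < h)
    (hloc : IsLocal x W (· ∈ P)) {i j s t : ℕ} (hs : i + s + W ∈ P) (ht : j + t + W ∈ P)
    (hsW : s ≤ W) (hst : s / h = t / h) (hij : wordSeg x i (3 * W) = wordSeg x j (3 * W)) :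
    s = t := by
  have hs' : j + s + W ∈ P :=
    (hloc (wordSeg_congr_of_le hij (s := s) (m := 2 * W) (by lia))).mp hs
  have hshift : IsSeparated h {r | j + r + W ∈ P} := fun a ha b hb hab => by
    have := hP ha hb (by lia)
    lia
  exact hshift.eq_of_div_eq hh hs' ht hst

variable [Finite A]

-- The value `f i` can be read off each of the `W` factors of length `3 * W` containing the window
-- around `i`, and such a factor together with the block of length `h` in which the window starts
-- determines the offset of that window.
theorem IsSeparated.ncard_image_inter_Ici_mul_le (hP : IsSeparated h P) (hh : 0 < h)
    (hloc : IsLocal x W (· ∈ P)) (hf : IsLocal x W f) :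
    (f '' (P ∩ Set.Ici (2 * W))).ncard * W ≤ complexity (Fac x) (3 * W) * (W / h + 1) := by
  have hpre : ∀ b ∈ f '' (P ∩ Set.Ici (2 * W)), ∃ i, 2 * W ≤ i ∧ i ∈ P ∧ f i = b := by
    rintro _ ⟨i, ⟨hi, hWi⟩, rfl⟩
    exact ⟨i, hWi, hi, rfl⟩
  choose! g hgW hgP hgf using hpre
  let start (b : β) (s : ℕ) : ℕ := g b - W - s
  have hstart {b s} (hb : b ∈ f '' (P ∩ Set.Ici (2 * W))) (hs : s < W) :
      start b s + s + W = g b := by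
    have := hgW b hb
    lia
  let code (q : β × ℕ) : List A × ℕ := (wordSeg x (start q.1 q.2) (3 * W), q.2 / h)
  have hmaps : ∀ q ∈ (f '' (P ∩ Set.Ici (2 * W))) ×ˢ Set.Iio W,
      code q ∈ {u ∈ Fac x | u.length = 3 * W} ×ˢ Set.Iio (W / h + 1) := fun q hq =>
    ⟨⟨wordSeg_mem_fac _ _ _, length_wordSeg _ _ _⟩,
      Nat.lt_succ_of_le (Nat.div_le_div_right (Set.mem_Iio.mp hq.2).le)⟩
  have hinj : Set.InjOn code ((f '' (P ∩ Set.Ici (2 * W))) ×ˢ Set.Iio W) := by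
    rintro ⟨b, s⟩ ⟨hb, hs⟩ ⟨c, t⟩ ⟨hc, ht⟩ hcode
    rw [Set.mem_Iio] at hs ht
    obtain ⟨hword, hst⟩ := Prod.ext_iff.mp hcode
    obtain rfl : s = t := hP.offset_eq_of_wordSeg_eq hh hloc
      ((hstart hb hs).symm ▸ hgP b hb) ((hstart hc ht).symm ▸ hgP c hc) hs.le hst hword
    have hfeq := hf (wordSeg_congr_of_le hword (s := s) (m := 2 * W) (by lia))
    rw [hstart hb hs, hstart hc ht, hgf b hb, hgf c hc] at hfeq
    rw [hfeq]
  simpa only [complexity, Set.ncard_prod, Set.ncard_Iio_nat] using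
    Set.ncard_le_ncard_of_injOn code hmaps hinj
      ((finite_setOf_mem_and_length_eq _ _).prod (Set.finite_Iio _))

theorem IsSeparated.ncard_image_le (hP : IsSeparated h P) (hh : 0 < h)
    (hloc : IsLocal x W (· ∈ P)) (hf : IsLocal x W f) (hW : 0 < W) {K : ℕ}
    (hK : complexity (Fac x) (3 * W) ≤ K * W) :
    (f '' P).ncard ≤ K * (W / h + 1) + (2 * W / h + 1) := by
  have hfar : (f '' (P ∩ Set.Ici (2 * W))).ncard ≤ K * (W / h + 1) := by
    refine Nat.le_of_mul_le_mul_right ?_ hW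
    calc (f '' (P ∩ Set.Ici (2 * W))).ncard * W
        ≤ complexity (Fac x) (3 * W) * (W / h + 1) := hP.ncard_image_inter_Ici_mul_le hh hloc hf
      _ ≤ K * W * (W / h + 1) := Nat.mul_le_mul_right _ hK
      _ = K * (W / h + 1) * W := by ring
  have hnear : (f '' (P ∩ Set.Iio (2 * W))).ncard ≤ 2 * W / h + 1 :=
    (Set.ncard_image_le ((Set.finite_Iio _).subset Set.inter_subset_right)).trans
      (hP.ncard_inter_Iio_le hh _)
  have hunion : f '' P = f '' (P ∩ Set.Ici (2 * W)) ∪ f '' (P ∩ Set.Iio (2 * W)) := by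
    rw [← Set.image_union, ← Set.inter_union_distrib_left, Set.union_comm, Set.Iio_union_Ici,
      Set.inter_univ]
  rw [hunion]
  exact (Set.ncard_union_le _ _).trans (Nat.add_le_add hfar hnear)

end Local

section Occurrences

variable {x : ℕ → A} {w : List A} {h W i j : ℕ}

/-- The set of positions at which the word `w` occurs in `x`. -/
def occurrences (x : ℕ → A) (w : List A) : Set ℕ :=
  {i | wordSeg x i w.length = w}

/-- The occurrences of `w` preceded by no other occurrence at distance less than `h`, i.e. the
first elements of the runs of overlapping occurrences. -/
def initialOccurrences (x : ℕ → A) (w : List A) (h : ℕ) : Set ℕ :=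
  {i ∈ occurrences x w | ∀ j ∈ occurrences x w, j < i → j + h ≤ i}

/-- The occurrences of `w` followed by no other occurrence at distance less than `h`, i.e. the
last elements of the runs of overlapping occurrences. -/
def finalOccurrences (x : ℕ → A) (w : List A) (h : ℕ) : Set ℕ :=
  {i ∈ occurrences x w | ∀ j ∈ occurrences x w, i < j → i + h ≤ j}

theorem isSeparated_initialOccurrences : IsSeparated h (initialOccurrences x w h) :=
  fun i hi _ hj hij => hj.2 i hi.1 hij

theorem isSeparated_finalOccurrences : IsSeparated h (finalOccurrences x w h) :=
  fun _ hi j hj hij => hi.2 j hj.1 hij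

theorem add_mem_occurrences_of_wordSeg_eq {n s : ℕ} (hij : wordSeg x i n = wordSeg x j n)
    (hs : s + w.length ≤ n) (hi : i + s ∈ occurrences x w) : j + s ∈ occurrences x w :=
  (wordSeg_congr_of_le hij hs).symm.trans hi

theorem isLocal_mem_initialOccurrences (hW : w.length + h ≤ W) :
    IsLocal x W (· ∈ initialOccurrences x w h) := by
  refine isLocal_mem_of_imp fun i j hij ⟨hocc, hinit⟩ =>
    ⟨add_mem_occurrences_of_wordSeg_eq hij (by lia) hocc, fun k hk hkj => ?_⟩
  by_contra hlt
  obtain ⟨s, rfl⟩ := Nat.exists_eq_add_of_le (show j ≤ k by lia)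
  have := hinit _ (add_mem_occurrences_of_wordSeg_eq hij.symm (by lia) hk) (by lia)
  lia

theorem isLocal_mem_finalOccurrences (hW : w.length + h ≤ W) :
    IsLocal x W (· ∈ finalOccurrences x w h) := by
  refine isLocal_mem_of_imp fun i j hij ⟨hocc, hfinal⟩ =>
    ⟨add_mem_occurrences_of_wordSeg_eq hij (by lia) hocc, fun k hk hjk => ?_⟩
  by_contra hlt
  obtain ⟨s, rfl⟩ := Nat.exists_eq_add_of_le (show j ≤ k by lia)
  have := hfinal _ (add_mem_occurrences_of_wordSeg_eq hij.symm (by lia) hk) (by lia)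
  lia

theorem getElem?_of_mem_occurrences (hi : i ∈ occurrences x w) {t : ℕ} (ht : t < w.length) :
    w[t]? = some (x (i + t)) := by
  have hw : wordSeg x i w.length = w := hi
  rw [← getElem?_wordSeg (x := x) (i := i) ht, hw]

theorem hasPeriod_of_mem_occurrences {d : ℕ} (hi : i ∈ occurrences x w)
    (hid : i + d ∈ occurrences x w) : w.HasPeriod d := by
  rw [List.hasPeriod_iff_getElem?]
  intro t ht
  rw [getElem?_of_mem_occurrences hid (by lia), getElem?_of_mem_occurrences hi (by lia),
    add_assoc, add_comm d]

end Occurrences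

section PeriodicExtension

variable {x : ℕ → A} {w : List A} {h i t : ℕ} {y : ℤ → A}

/-- The bi-infinite word `y` extends `w`, placed at the origin, and inherits all the periods of `w`
that are at most `h`. -/
def IsPeriodicExtension (h : ℕ) (w : List A) (y : ℤ → A) : Prop :=
  wordSegZ y 0 w.length = w ∧ ∀ d ≤ h, w.HasPeriod d → Function.Periodic y d

-- By the Fine–Wilf theorem the periods of `w` that are at most `h` are multiples of the smallest.
theorem exists_isPeriodicExtension (hw : w ≠ []) (hh : 2 * h ≤ w.length) :
    ∃ y, IsPeriodicExtension h w y := by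
  classical
  have hperiod : ∃ p, 0 < p ∧ w.HasPeriod p :=
    ⟨w.length, List.length_pos_iff.mpr hw, List.hasPeriod_of_length_le w _ le_rfl⟩
  obtain ⟨hp, hwp⟩ := Nat.find_spec hperiod
  have hmin {d} (hd : 0 < d) (hwd : w.HasPeriod d) := Nat.find_min' hperiod ⟨hd, hwd⟩
  have hpw := hmin (List.length_pos_iff.mpr hw) (List.hasPeriod_of_length_le w _ le_rfl)
  set p := Nat.find hperiod
  let y (t : ℤ) : A := w.getD (t % p).toNat (w.head hw)
  have hy : Function.Periodic y p := fun t => by simp [y]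
  refine ⟨y, ?_, fun d hd hwd => ?_⟩
  · refine List.ext_getElem (length_wordSegZ y 0 _) fun t _ ht => ?_
    simp only [wordSegZ_eq_map, List.getElem_map, List.getElem_range, zero_add, y]
    rw [← Int.natCast_mod, Int.toNat_natCast, List.getD_eq_getElem?_getD,
      hwp.getElem?_mod p t w ht, List.getElem?_eq_getElem ht, Option.getD_some]
  · obtain rfl | hd0 := d.eq_zero_or_pos
    · simp
    have hpd := hmin hd0 hwd
    have hdvd : p ∣ d := by
      refine Nat.gcd_eq_left_iff_dvd.mp <| (Nat.gcd_le_left d hp).antisymm ?_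
      exact hmin (Nat.gcd_pos_of_pos_left d hp) (hwp.gcd hwd (by lia))
    obtain ⟨k, rfl⟩ := hdvd
    simpa [mul_comm] using hy.nat_mul k

theorem apply_add_eq_of_mem_occurrences (hy : IsPeriodicExtension h w y)
    (hi : i ∈ occurrences x w) (hit : i ≤ t) (ht : t < i + w.length) : x t = y (t - i) := by
  obtain ⟨s, rfl⟩ := exists_add_of_le hit
  have heq : wordSeg x i w.length = wordSegZ y 0 w.length := hi.trans hy.1.symm
  simpa using wordSeg_eq_wordSegZ_iff.mp heq s (by lia)

theorem apply_sub_eq_of_mem_occurrences (hy : IsPeriodicExtension h w y) {j : ℕ}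
    (hi : i ∈ occurrences x w) (hj : j ∈ occurrences x w) (hji : j ≤ i) (hij : i ≤ j + h) (s : ℤ) :
    y (s - j) = y (s - i) := by
  obtain ⟨d, rfl⟩ := exists_add_of_le hji
  have hper := hy.2 d (by lia) (hasPeriod_of_mem_occurrences hj hi)
  rw [← hper (s - (j + d : ℕ))]
  congr 1
  push_cast
  ring

theorem apply_eq_of_forall_notMem_initialOccurrences (hy : IsPeriodicExtension h w y)
    (hh : h ≤ w.length) {a : ℕ} (hi : i ∈ occurrences x w)
    (hinit : ∀ j, a ≤ j → j ≤ i → j ∉ initialOccurrences x w h) (hat : a ≤ t)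
    (hti : t < i + w.length) : x t = y (t - i) := by
  induction i using Nat.strong_induction_on with
  | _ i ih =>
    by_cases hit : i ≤ t
    · exact apply_add_eq_of_mem_occurrences hy hi hit hti
    obtain ⟨j, hj, hji, hij⟩ : ∃ j ∈ occurrences x w, j < i ∧ i < j + h := by
      have := hinit i (by lia) le_rfl
      simpa [initialOccurrences, hi] using this
    rw [← apply_sub_eq_of_mem_occurrences hy hi hj hji.le hij.le]
    exact ih j hji hj (fun k hak hkj => hinit k hak (hkj.trans hji.le)) (by lia)

theorem apply_eq_of_forall_notMem_finalOccurrences (hy : IsPeriodicExtension h w y)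
    (hh : h ≤ w.length) {b : ℕ} (hi : i ∈ occurrences x w)
    (hfinal : ∀ j, i ≤ j → j + w.length ≤ b → j ∉ finalOccurrences x w h)
    (hit : i ≤ t) (htb : t < b) : x t = y (t - i) := by
  induction hk : b - i using Nat.strong_induction_on generalizing i with
  | _ k ih =>
    by_cases hti : t < i + w.length
    · exact apply_add_eq_of_mem_occurrences hy hi hit hti
    obtain ⟨j, hj, hij, hji⟩ : ∃ j ∈ occurrences x w, i < j ∧ j < i + h := by
      have := hfinal i le_rfl (by lia)
      simpa [finalOccurrences, hi] using this
    rw [apply_sub_eq_of_mem_occurrences hy hj hi hij.le hji.le]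
    exact ih (b - j) (by lia) hj (fun k hjk => hfinal k (hij.le.trans hjk)) (by lia) rfl

end PeriodicExtension

section Cutting

variable {x : ℕ → A} {w : List A} {y : ℤ → A} {P : Set ℕ} {h n W K : ℕ}

/-- The factors of `x` starting or ending at a position `i + h` with `i ∈ P`. If `v` is longer than
`i + h`, then `i + h - v.length = 0`, so the second set also contains some prefixes of `x`. -/
def cutFactors (x : ℕ → A) (P : Set ℕ) (h : ℕ) : Set (List A) :=
  {v | ∃ i ∈ P, v = wordSeg x (i + h) v.length} ∪
    {v | ∃ i ∈ P, v = wordSeg x (i + h - v.length) v.length}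

/-- The factors of `y` starting or ending at the position `h`. -/
def cutFactorsZ (y : ℤ → A) (h : ℕ) : Set (List A) :=
  {v | v = wordSegZ y h v.length} ∪ {v | v = wordSegZ y (h - v.length) v.length}

/-- The words into which the factors of `x` containing `w` are cut: the cut is made at distance `h`
after an occurrence of `w` which starts or ends a run of overlapping occurrences, and if there is
none, the factor is a factor of the periodic extension `y` of `w` and is cut there. -/
def cuttingSet (x : ℕ → A) (w : List A) (h : ℕ) (y : ℤ → A) : Set (List A) :=
  cutFactors x (initialOccurrences x w h) h ∪ cutFactors x (finalOccurrences x w h) h ∪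
    cutFactorsZ y h

theorem complexity_cutFactorsZ_le (y : ℤ → A) (h n : ℕ) : complexity (cutFactorsZ y h) n ≤ 2 :=
  (complexity_union_le _ _ n).trans <| Nat.add_le_add
    (complexity_setOf_eq_apply_length_le_one _ n)
    (complexity_setOf_eq_apply_length_le_one (fun l => wordSegZ y (h - l) l) n)

theorem isLocal_wordSeg_add (hW : n + h ≤ W) : IsLocal x W fun i => wordSeg x (i + h) n := by
  intro i j hij
  simpa only [add_assoc] using wordSeg_congr_of_le hij (s := W + h) (m := n) (by lia)

theorem isLocal_wordSeg_add_sub (hW : n + h ≤ W) :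
    IsLocal x W fun i => wordSeg x (i + h - n) n := by
  intro i j hij
  have hstart (k : ℕ) : k + W + h - n = k + (W + h - n) := by lia
  simpa only [hstart] using wordSeg_congr_of_le hij (s := W + h - n) (m := n) (by lia)

theorem wordSeg_mem_prodL_cutFactors {a i : ℕ} (hi : i ∈ P) (hai : a ≤ i)
    (hian : i + 2 * h ≤ a + n) :
    wordSeg x a n ∈
      prodL {v ∈ cutFactors x P h | h ≤ v.length} {v ∈ cutFactors x P h | h ≤ v.length} := by
  obtain ⟨l, r, rfl, hl, hr⟩ : ∃ l r, n = l + r ∧ a + l = i + h ∧ h ≤ r :=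
    ⟨i + h - a, a + n - (i + h), by lia, by lia, by lia⟩
  rw [wordSeg_add]
  refine ⟨_, ⟨Or.inr ⟨i, hi, ?_⟩, by simp only [length_wordSeg]; lia⟩,
    _, ⟨Or.inl ⟨i, hi, ?_⟩, by simpa using hr⟩, rfl⟩
  · rw [length_wordSeg, ← hl, Nat.add_sub_cancel]
  · rw [length_wordSeg, hl]

theorem wordSeg_mem_prodL_cutFactorsZ {a i : ℕ} (hai : a ≤ i) (hian : i + 2 * h ≤ a + n)
    (hxy : ∀ t, a ≤ t → t < a + n → x t = y (t - i)) :
    wordSeg x a n ∈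
      prodL {v ∈ cutFactorsZ y h | h ≤ v.length} {v ∈ cutFactorsZ y h | h ≤ v.length} := by
  obtain ⟨l, r, rfl, hl, hr⟩ : ∃ l r, n = l + r ∧ a + l = i + h ∧ h ≤ r :=
    ⟨i + h - a, a + n - (i + h), by lia, by lia, by lia⟩
  have hfactor {b m : ℕ} {k : ℤ} (hab : a ≤ b) (hbm : b + m ≤ a + (l + r)) (hk : b - i = k) :
      wordSeg x b m = wordSegZ y k m := by
    refine wordSeg_eq_wordSegZ_iff.mpr fun t ht => ?_
    rw [hxy _ (by lia) (by lia), ← hk]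
    congr 1
    lia
  rw [wordSeg_add]
  refine ⟨_, ⟨Or.inr ?_, by simp only [length_wordSeg]; lia⟩,
    _, ⟨Or.inl ?_, by simpa using hr⟩, rfl⟩
  · rw [Set.mem_ofPred_eq, length_wordSeg]
    exact hfactor le_rfl (by lia) (by lia)
  · rw [Set.mem_ofPred_eq, length_wordSeg]
    exact hfactor (by lia) (by lia) (by lia)

theorem wordSeg_mem_prodL_cuttingSet (hy : IsPeriodicExtension h w y) (hw : 2 * h ≤ w.length)
    {a i : ℕ} (hi : i ∈ occurrences x w) (hai : a ≤ i) (hian : i + w.length ≤ a + n) :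
    wordSeg x a n ∈
      prodL {v ∈ cuttingSet x w h y | h ≤ v.length} {v ∈ cuttingSet x w h y | h ≤ v.length} := by
  have hmono {S : Set (List A)} (hS : S ⊆ cuttingSet x w h y) :
      prodL {v ∈ S | h ≤ v.length} {v ∈ S | h ≤ v.length} ⊆
        prodL {v ∈ cuttingSet x w h y | h ≤ v.length} {v ∈ cuttingSet x w h y | h ≤ v.length} :=
    prodL_mono (fun v hv => ⟨hS hv.1, hv.2⟩) (fun v hv => ⟨hS hv.1, hv.2⟩)
  by_cases hinit : ∃ j, a ≤ j ∧ j ≤ i ∧ j ∈ initialOccurrences x w h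
  · obtain ⟨j, haj, hji, hj⟩ := hinit
    exact hmono (fun v hv => Or.inl (Or.inl hv)) (wordSeg_mem_prodL_cutFactors hj haj (by lia))
  by_cases hfinal : ∃ j, i ≤ j ∧ j + w.length ≤ a + n ∧ j ∈ finalOccurrences x w h
  · obtain ⟨j, hij, hjn, hj⟩ := hfinal
    exact hmono (fun v hv => Or.inl (Or.inr hv))
      (wordSeg_mem_prodL_cutFactors hj (hai.trans hij) (by lia))
  push Not at hinit hfinal
  refine hmono (fun v hv => Or.inr hv) (wordSeg_mem_prodL_cutFactorsZ hai (by lia) ?_)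
  intro t hat htn
  obtain hti | hit := lt_or_ge t i
  · exact apply_eq_of_forall_notMem_initialOccurrences hy (by lia) hi hinit hat (by lia)
  · exact apply_eq_of_forall_notMem_finalOccurrences hy (by lia) hi hfinal hit htn

variable [Finite A]

theorem IsSeparated.complexity_setOf_exists_mem_eq_le (hP : IsSeparated h P) (hh : 0 < h)
    (hloc : IsLocal x W (· ∈ P)) {g : ℕ → ℕ → List A} (hgn : ∀ i, (g i n).length = n)
    (hg : IsLocal x W fun i => g i n) (hW : 0 < W)
    (hK : complexity (Fac x) (3 * W) ≤ K * W) :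
    complexity {v | ∃ i ∈ P, v = g i v.length} n ≤ K * (W / h + 1) + (2 * W / h + 1) := by
  refine le_trans (Set.ncard_le_ncard ?_ ?_) (hP.ncard_image_le hh hloc hg hW hK)
  · rintro v ⟨⟨i, hi, hv⟩, rfl⟩
    exact ⟨i, hi, hv.symm⟩
  · exact (List.finite_length_eq A n).subset (Set.image_subset_iff.mpr fun i _ => hgn i)

theorem complexity_cutFactors_le (hP : IsSeparated h P) (hh : 0 < h)
    (hloc : IsLocal x W (· ∈ P)) (hW : n + h ≤ W) (hK : complexity (Fac x) (3 * W) ≤ K * W) :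
    complexity (cutFactors x P h) n ≤ 2 * (K * (W / h + 1) + (2 * W / h + 1)) := by
  refine (complexity_union_le _ _ n).trans ((Nat.add_le_add ?_ ?_).trans_eq (two_mul _).symm)
  · exact hP.complexity_setOf_exists_mem_eq_le hh hloc (g := fun i l => wordSeg x (i + h) l)
      (fun _ => length_wordSeg _ _ _) (isLocal_wordSeg_add hW) (by lia) hK
  · exact hP.complexity_setOf_exists_mem_eq_le hh hloc (g := fun i l => wordSeg x (i + h - l) l)
      (fun _ => length_wordSeg _ _ _) (isLocal_wordSeg_add_sub hW) (by lia) hK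

theorem complexity_cuttingSet_le (hh : 0 < h) (hwW : w.length + h ≤ W) (hnW : n + h ≤ W)
    (hK : complexity (Fac x) (3 * W) ≤ K * W) :
    complexity (cuttingSet x w h y) n ≤ 4 * (K * (W / h + 1) + (2 * W / h + 1)) + 2 := by
  have hinit := complexity_cutFactors_le isSeparated_initialOccurrences hh
    (isLocal_mem_initialOccurrences hwW) hnW hK
  have hfinal := complexity_cutFactors_le isSeparated_finalOccurrences hh
    (isLocal_mem_finalOccurrences hwW) hnW hK
  have hunion := complexity_union_le
    (cutFactors x (initialOccurrences x w h) h ∪ cutFactors x (finalOccurrences x w h) h)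
    (cutFactorsZ y h) n
  have hunion' := complexity_union_le (cutFactors x (initialOccurrences x w h) h)
    (cutFactors x (finalOccurrences x w h) h) n
  have hZ := complexity_cutFactorsZ_le y h n
  unfold cuttingSet
  lia

end Cutting

section Scales

theorem exists_apply_succ_le_apply_add (f : ℕ → ℕ) {a n B : ℕ}
    (h : f (a + n) < f a + n * (B + 1)) : ∃ m, a ≤ m ∧ m < a + n ∧ f (m + 1) ≤ f m + B := by
  by_contra! hinc
  have hgrowth : ∀ k ≤ n, f a + k * (B + 1) ≤ f (a + k) := by
    intro k hk
    induction k with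
    | zero => simp
    | succ k ih =>
      have := ih (by lia)
      have := hinc (a + k) (by lia) (by lia)
      rw [← add_assoc]
      lia
  exact (hgrowth n le_rfl).not_gt h

variable [Finite A] {x : ℕ → A}

theorem exists_complexity_rightSpecial_le {C : ℕ}
    (hC : ∀ n, 1 ≤ n → complexity (Fac x) n ≤ C * n) {M : ℕ} (hM : 1 ≤ M) :
    ∃ m, 2 * M ≤ m ∧ m < 4 * M ∧ complexity {u | RightSpecial (Fac x) u} m ≤ 2 * C := by
  have hlt : complexity (Fac x) (2 * M + 2 * M) <
      complexity (Fac x) (2 * M) + 2 * M * (2 * C + 1) := by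
    have := hC (2 * M + 2 * M) (by lia)
    nlinarith
  obtain ⟨m, hMm, hmM, hm⟩ := exists_apply_succ_le_apply_add (complexity (Fac x)) hlt
  have := complexity_fac_add_complexity_rightSpecial_le x m
  exact ⟨m, hMm, by lia, by lia⟩

theorem exists_prodL_cover_of_occurrences {C : ℕ}
    (hC : ∀ n, 1 ≤ n → complexity (Fac x) n ≤ C * n) (L : ℕ) :
    ∃ B, ∀ M, 1 ≤ M → ∀ w : List A, 2 * M ≤ w.length → w.length ≤ 4 * M → ∃ S : Set (List A),
      (∀ v ∈ S, M ≤ v.length ∧ v.length ≤ L * M) ∧ (∀ n, complexity S n ≤ B) ∧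
      ∀ a n i, n ≤ L * M → i ∈ occurrences x w → a ≤ i → i + w.length ≤ a + n →
        wordSeg x a n ∈ prodL S S := by
  refine ⟨4 * (3 * C * (L + 5 + 1) + (2 * (L + 5) + 1)) + 2, fun M hM w hMw hwM => ?_⟩
  obtain ⟨y, hy⟩ := exists_isPeriodicExtension (List.length_pos_iff.mp (by lia)) hMw
  refine ⟨{v ∈ cuttingSet x w M y | M ≤ v.length ∧ v.length ≤ L * M}, fun v hv => hv.2,
    fun n => ?_, fun a n i hn hi hai hian => ?_⟩
  · obtain hn | hn := lt_or_ge (L * M) n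
    · refine (complexity_eq_zero fun v hv => ?_).trans_le (Nat.zero_le _)
      exact (hv.2.2.trans_lt hn).ne
    have hcompl := complexity_cuttingSet_le (x := x) (w := w) (y := y) (n := n)
      (W := (L + 5) * M) (K := 3 * C) hM (by lia) (by lia)
      ((hC _ (by nlinarith)).trans_eq (by ring))
    rw [← mul_assoc, Nat.mul_div_cancel _ hM, Nat.mul_div_cancel _ hM] at hcompl
    exact (complexity_mono (Set.sep_subset _ _) n).trans hcompl
  · obtain ⟨s, hs, t, ht, hst⟩ := wordSeg_mem_prodL_cuttingSet hy hMw hi hai hian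
    have hlen : n = s.length + t.length := by simpa using congrArg List.length hst
    exact ⟨s, ⟨hs.1, hs.2, by lia⟩, t, ⟨ht.1, ht.2, by lia⟩, hst⟩

theorem exists_prodL_cover_at_scale {C : ℕ} (hC : ∀ n, 1 ≤ n → complexity (Fac x) n ≤ C * n)
    (hx : ¬ UltimatelyPeriodic x) (L : ℕ) :
    ∃ E, ∀ M, 1 ≤ M → ∃ S : Set (List A),
      (∀ v ∈ S, M ≤ v.length ∧ v.length ≤ L * M) ∧ (∀ n, complexity S n ≤ E) ∧
      ∀ a n, 4 * (C + 1) * M ≤ n → n ≤ L * M → wordSeg x a n ∈ prodL S S := by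
  obtain ⟨B, hB⟩ := exists_prodL_cover_of_occurrences hC L
  refine ⟨2 * C * B, fun M hM => ?_⟩
  obtain ⟨m, hMm, hmM, hm⟩ := exists_complexity_rightSpecial_le hC hM
  choose! T hT hTB hcover using hB M hM
  have hfin := finite_setOf_mem_and_length_eq {u | RightSpecial (Fac x) u} m
  refine ⟨⋃ u ∈ hfin.toFinset, T u, fun v hv => ?_, fun n => ?_, fun a n hn hnL => ?_⟩
  · obtain ⟨u, hu, hvu⟩ := Set.mem_iUnion₂.mp hv
    obtain ⟨-, rfl⟩ := hfin.mem_toFinset.mp hu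
    exact hT u hMm hmM.le v hvu
  · calc complexity (⋃ u ∈ hfin.toFinset, T u) n ≤ hfin.toFinset.card * B :=
          complexity_biUnion_le_card_mul _ fun u hu => by
            obtain ⟨-, rfl⟩ := hfin.mem_toFinset.mp hu
            exact hTB u hMm hmM.le n
      _ ≤ 2 * C * B :=
          Nat.mul_le_mul_right _ ((Set.ncard_eq_toFinset_card _ hfin).symm.trans_le hm)
  · obtain ⟨i, hai, hip, hi⟩ := exists_rightSpecial_wordSeg hx a m
    have hpm := hC m (by lia)
    have hin : i + m ≤ a + n := by nlinarith
    have hsub := Set.subset_biUnion_of_mem (s := (hfin.toFinset : Set (List A))) (u := T)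
      (Finset.mem_coe.mpr (hfin.mem_toFinset.mpr ⟨hi, length_wordSeg x i m⟩))
    have hlen := length_wordSeg x i m
    exact prodL_mono hsub hsub (hcover (wordSeg x i m) (by lia) (by lia) a n i hnL
      (congrArg (wordSeg x i) hlen) hai (by lia))

theorem polyBound_zero_iUnion_of_scales {L : ℕ → Set (List A)} {D E : ℕ}
    (hlen : ∀ k, ∀ v ∈ L k, 2 ^ k ≤ v.length ∧ v.length ≤ D * 2 ^ k)
    (hE : ∀ k n, complexity (L k) n ≤ E) : PolyBound (complexity (⋃ k, L k)) 0 := by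
  refine polyBound_zero_iff.mpr ⟨(D + 1) * E, fun n => ?_⟩
  have hscale {k} {v} (hv : v ∈ L k) :
      k ∈ Finset.Icc (Nat.log 2 v.length - D) (Nat.log 2 v.length) := by
    obtain ⟨hlow, hhigh⟩ := hlen k v hv
    refine Finset.mem_Icc.mpr ⟨?_, Nat.le_log_of_pow_le one_lt_two hlow⟩
    rw [tsub_le_iff_right]
    have hD : v.length ≤ 2 ^ (k + D) := calc
      v.length ≤ D * 2 ^ k := hhigh
      _ ≤ 2 ^ D * 2 ^ k := Nat.mul_le_mul_right _ D.lt_two_pow_self.le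
      _ = 2 ^ (k + D) := by ring
    exact (Nat.log_mono_right hD).trans_eq (Nat.log_pow one_lt_two _)
  let I := Finset.Icc (Nat.log 2 n - D) (Nat.log 2 n)
  calc complexity (⋃ k, L k) n ≤ complexity (⋃ k ∈ I, L k) n := by
        refine complexity_le_of_forall_length_eq fun v hv hvn => ?_
        obtain ⟨k, hk⟩ := Set.mem_iUnion.mp hv
        have hkI : k ∈ I := by simpa only [hvn] using hscale hk
        exact Set.mem_biUnion (Finset.mem_coe.mpr hkI) hk
    _ ≤ I.card * E := complexity_biUnion_le_card_mul _ fun k _ => hE k n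
    _ ≤ (D + 1) * E := Nat.mul_le_mul_right _ (by rw [Nat.card_Icc]; lia)

theorem exists_polyBound_zero_fac_subset_prodL (hp : PolyBound (complexity (Fac x)) 1)
    (hx : ¬ UltimatelyPeriodic x) :
    ∃ S : Set (List A), PolyBound (complexity S) 0 ∧ Fac x ⊆ prodL S S := by
  obtain ⟨C, hC⟩ := polyBound_one_iff.mp hp
  let D := 4 * (C + 1)
  obtain ⟨E, hE⟩ := exists_prodL_cover_at_scale hC hx (2 * D)
  choose S hlen hcompl hcover using fun k => hE (2 ^ k) Nat.one_le_two_pow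
  let short : Set (List A) := {v | v.length < D}
  refine ⟨short ∪ ⋃ k, S k, ?_, ?_⟩
  · obtain ⟨B, hB⟩ := polyBound_zero_iff.mp (polyBound_zero_iUnion_of_scales hlen hcompl)
    exact polyBound_zero_iff.mpr ⟨short.ncard + B, fun n => (complexity_union_le _ _ n).trans
      (Nat.add_le_add (complexity_le_ncard (List.finite_length_lt A D) n) (hB n))⟩
  rintro _ ⟨a, n, rfl⟩
  obtain hn | hn := lt_or_ge n D
  · exact ⟨wordSeg x a n, Or.inl (by simpa [short] using hn), [],
      Or.inl (by simp [short, D]), (List.append_nil _).symm⟩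
  have hsub (k) : S k ⊆ short ∪ ⋃ k, S k := (Set.subset_iUnion S k).trans Set.subset_union_right
  have hD : 0 < D := by lia
  have hlow : 2 ^ Nat.log 2 (n / D) ≤ n / D := Nat.pow_log_le_self 2 (Nat.div_pos hn hD).ne'
  have hhigh : n / D < 2 ^ (Nat.log 2 (n / D) + 1) := Nat.lt_pow_succ_log_self one_lt_two _
  refine prodL_mono (hsub _) (hsub _) (hcover (Nat.log 2 (n / D)) a n ?_ ?_)
  · exact (Nat.mul_le_mul_left D hlow).trans (Nat.mul_div_le n D)
  · calc n ≤ 2 ^ (Nat.log 2 (n / D) + 1) * D := (Nat.lt_mul_of_div_lt hhigh hD).le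
      _ = 2 * D * 2 ^ Nat.log 2 (n / D) := by ring

end Scales

section Dimension

variable [Finite A] {x : ℕ → A}

theorem polyDim_zero_fac_le_two_iff :
    polyDim 0 (Fac x) ≤ 2 ↔ PolyBound (complexity (Fac x)) 1 := by
  rw [← Nat.cast_ofNat, polyDim_le_natCast_iff]
  constructor
  · rintro ⟨m, hm, hm', S, hS, hsub⟩
    obtain rfl | rfl : m = 1 ∨ m = 2 := by lia
    · exact (hS.mono (complexity_mono (powL_one S ▸ hsub))).one_of_zero
    · exact (polyBound_complexity_prodL hS hS).mono (complexity_mono (powL_two S ▸ hsub))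
  · intro hp
    by_cases hx : UltimatelyPeriodic x
    · exact ⟨1, le_rfl, one_le_two, Fac x, polyBound_zero_of_ultimatelyPeriodic hx,
        (powL_one _).ge⟩
    · obtain ⟨S, hS, hsub⟩ := exists_polyBound_zero_fac_subset_prodL hp hx
      exact ⟨2, one_le_two, le_rfl, S, hS, powL_two S ▸ hsub⟩

theorem polyDim_zero_fac_eq_two_iff :
    polyDim 0 (Fac x) = 2 ↔
      PolyBound (complexity (Fac x)) 1 ∧ ¬ PolyBound (complexity (Fac x)) 0 := by
  rw [← polyDim_zero_fac_le_two_iff, ← polyDim_le_one_iff, not_le]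
  exact ⟨fun h => ⟨h.le, h.symm ▸ (mod_cast one_lt_two)⟩,
    fun h => h.1.antisymm (one_add_one_eq_two (R := ℕ∞) ▸ Order.add_one_le_of_lt h.2)⟩

theorem polyBound_one_and_not_zero_iff_theta :
    (PolyBound (complexity (Fac x)) 1 ∧ ¬ PolyBound (complexity (Fac x)) 0) ↔
      ∃ c₁ c₂ : ℝ, 0 < c₁ ∧ c₁ ≤ c₂ ∧ ∃ N : ℕ, ∀ n : ℕ, N ≤ n →
        c₁ * n ≤ (complexity (Fac x) n : ℝ) ∧ (complexity (Fac x) n : ℝ) ≤ c₂ * n := by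
  constructor
  · rintro ⟨hp, hp₀⟩
    obtain ⟨C, hC⟩ := polyBound_one_iff.mp hp
    have hlow := le_complexity_fac (mt polyBound_zero_of_ultimatelyPeriodic hp₀)
    have hC_pos : 1 ≤ C := by simpa using (hlow 1).trans (hC 1 le_rfl)
    refine ⟨1, C, one_pos, mod_cast hC_pos, 1, fun n hn => ⟨?_, mod_cast hC n hn⟩⟩
    simpa using hlow n
  · rintro ⟨c₁, c₂, hc₁, -, N, h⟩
    exact ⟨polyBound_one_of_eventually_le_mul fun n hn => (h n hn).2,
      not_polyBound_zero_of_eventually_mul_le hc₁ fun n hn => (h n hn).1⟩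

end Dimension

/-- `d₀(x) = 2` iff `p_x(n) = Θ(n)`; in particular every infinite word
of complexity `O(n)` has cost `0`. -/
theorem stmt13 (A : Type u) [Fintype A] [Nonempty A] (x : ℕ → A) :
    (polyDim 0 (Fac x) = 2 ↔
      ∃ c₁ c₂ : ℝ, 0 < c₁ ∧ c₁ ≤ c₂ ∧ ∃ N : ℕ, ∀ n : ℕ, N ≤ n →
        c₁ * n ≤ (complexity (Fac x) n : ℝ) ∧ (complexity (Fac x) n : ℝ) ≤ c₂ * n) ∧
    (PolyBound (complexity (Fac x)) 1 → cost (Fac x) = 0) := by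
  refine ⟨polyDim_zero_fac_eq_two_iff.trans polyBound_one_and_not_zero_iff_theta, fun hp => ?_⟩
  exact cost_eq_zero_of_polyDim_zero_ne_top
    (ne_top_of_le_ne_top (ENat.natCast_ne_top 2) (polyDim_zero_fac_le_two_iff.mpr hp))
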